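/- For every integer n with n = 8, n = 10, n = 14, or n ≥ 16, the cycle graph C_n satisfies rvcl(C_n) = ⌈n/2⌉. -/

import Mathlib

namespace LocatingRainbow

open SimpleGraph

variable {V : Type*}

/-- The internal vertices of a walk: its support without the endpoints. -/
def internalVertices {G : SimpleGraph V} {u v : V} (p : G.Walk u v) : List V :=
  p.support.tail.dropLast

/-- `c` is a rainbow vertex coloring of `G` (with colors in `Fin k`) if any two distinct
vertices are joined by a path whose internal vertices have pairwise distinct colors. -/
def IsRainbowVertexColoring (G : SimpleGraph V) {k : ℕ} (c : V → Fin k) : Prop :=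
  ∀ u v : V, u ≠ v → ∃ p : G.Walk u v, p.IsPath ∧ ((internalVertices p).map c).Nodup

/-- The distance from a vertex `v` to the color class of the color `i`. -/
noncomputable def distToColor (G : SimpleGraph V) {k : ℕ} (c : V → Fin k) (v : V) (i : Fin k) :
    ℕ :=
  sInf {m | ∃ y, c y = i ∧ G.dist v y = m}

/-- The rainbow code of a vertex `v`: the vector of distances to all color classes. -/
noncomputable def rainbowCode (G : SimpleGraph V) {k : ℕ} (c : V → Fin k) (v : V) :
    Fin k → ℕ :=
  fun i => distToColor G c v i

/-- `c` is a locating rainbow coloring if it is a rainbow vertex coloring and distinct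
vertices have distinct rainbow codes. -/
def IsLocatingRainbowColoring (G : SimpleGraph V) {k : ℕ} (c : V → Fin k) : Prop :=
  IsRainbowVertexColoring G c ∧ Function.Injective (rainbowCode G c)

/-- The rainbow vertex connection number of `G`. -/
noncomputable def rvc (G : SimpleGraph V) : ℕ :=
  sInf {k | ∃ c : V → Fin k, IsRainbowVertexColoring G c}

/-- The locating rainbow connection number of `G`. -/
noncomputable def rvcl (G : SimpleGraph V) : ℕ :=
  sInf {k | ∃ c : V → Fin k, IsLocatingRainbowColoring G c}

end LocatingRainbow

/-!
Upper bound: if equally colored vertices are far apart, every geodesic is rainbow. Coloring the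
cycle by `0, 1, …, m - 1, 1, 0, 2, …` with `m = ⌈n / 2⌉` has this property, and the exchange of
the first two colors in the second half makes the codes distinct.

Lower bound: walks on the cycle lift to `ℤ`, so in a rainbow coloring one of the two open arcs
between any two vertices has pairwise distinct colors, hence at most `k` vertices. Applied to the
outer neighbors of two vertices of equal color, this forces a distance of at least `n - k - 3`
between them along the cycle, in either direction. If `2 * k < n`, then some color occurs three
times, and going once around gives `3 * (n - k - 3) ≤ n`. Among the given `n`, only `8` and `10`
allow this; there the arcs with distinct colors are long enough to contain all colors, which
yields two vertices with the same code.
-/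

namespace LocatingRainbow

open SimpleGraph

variable {V : Type*}

section Walks

variable {G : SimpleGraph V} {u v w : V}

theorem mem_internalVertices_iff (p : G.Walk u v) :
    w ∈ internalVertices p ↔ ∃ i, 0 < i ∧ i < p.length ∧ p.getVert i = w := by
  simp only [internalVertices, List.mem_iff_getElem, List.getElem_dropLast, List.getElem_tail,
    List.length_dropLast, List.length_tail, Walk.length_support]
  constructor
  · rintro ⟨i, hi, rfl⟩
    exact ⟨i + 1, by omega, by omega, by grind [Walk.getVert_eq_support_getElem]⟩
  · rintro ⟨i, hi, hip, rfl⟩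
    exact ⟨i - 1, by omega, by grind [Walk.getVert_eq_support_getElem]⟩

theorem mem_internalVertices_of_mem_support {p : G.Walk u v} (hw : w ∈ p.support) (hu : w ≠ u)
    (hv : w ≠ v) : w ∈ internalVertices p := by
  obtain ⟨i, rfl, hi⟩ := Walk.mem_support_iff_exists_getVert.1 hw
  refine (mem_internalVertices_iff p).2 ⟨i, Nat.pos_of_ne_zero ?_, hi.lt_of_ne ?_, rfl⟩
  · rintro rfl
    exact hu p.getVert_zero
  · rintro rfl
    exact hv p.getVert_length

theorem dist_getVert_getVert_le (p : G.Walk u v) {i j : ℕ} (hij : i ≤ j) :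
    G.dist (p.getVert i) (p.getVert j) ≤ j - i := by
  calc G.dist (p.getVert i) (p.getVert j)
      = G.dist (p.getVert i) ((p.drop i).getVert (j - i)) := by
        rw [Walk.drop_getVert, Nat.add_sub_cancel' hij]
    _ ≤ ((p.drop i).take (j - i)).length := dist_le _
    _ ≤ j - i := by
        rw [Walk.take_length]
        exact min_le_left _ _

theorem dist_add_two_le_length {p : G.Walk u v} {x y : V} (hx : x ∈ internalVertices p)
    (hy : y ∈ internalVertices p) : G.dist x y + 2 ≤ p.length := by
  obtain ⟨i, hi, hip, rfl⟩ := (mem_internalVertices_iff p).1 hx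
  obtain ⟨j, hj, hjp, rfl⟩ := (mem_internalVertices_iff p).1 hy
  rcases le_total i j with hij | hij
  · have := dist_getVert_getVert_le p hij
    omega
  · have := dist_getVert_getVert_le p hij
    rw [dist_comm] at this
    omega

end Walks

section Colorings

variable {G : SimpleGraph V} {k : ℕ} {c : V → Fin k} {u v y : V}

theorem isRainbowVertexColoring_of_dist_lt (hG : G.Connected)
    (h : ∀ u v x y, x ≠ y → c x = c y → G.dist u v < G.dist x y + 2) :
    IsRainbowVertexColoring G c := by
  intro u v _
  obtain ⟨p, hp, hlen⟩ := hG.exists_path_of_dist u v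
  refine ⟨p, hp, List.Nodup.map_on (fun x hx y hy hxy ↦ ?_) ?_⟩
  · by_contra hne
    have := dist_add_two_le_length hx hy
    have := h u v x y hne hxy
    omega
  · exact hp.support_nodup.tail.sublist (List.dropLast_sublist _)

theorem distToColor_le_dist (G : SimpleGraph V) (c : V → Fin k) (v y : V) :
    distToColor G c v (c y) ≤ G.dist v y :=
  Nat.sInf_le ⟨y, rfl, rfl⟩

theorem exists_dist_eq_distToColor (G : SimpleGraph V) (c : V → Fin k) (v y : V) :
    ∃ z, c z = c y ∧ G.dist v z = distToColor G c v (c y) :=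
  Nat.sInf_mem (s := {m | ∃ z, c z = c y ∧ G.dist v z = m}) ⟨_, y, rfl, rfl⟩

theorem color_eq_of_rainbowCode_eq (hG : G.Connected)
    (h : rainbowCode G c u = rainbowCode G c v) : c u = c v := by
  obtain ⟨z, hz, hvz⟩ := exists_dist_eq_distToColor G c v u
  have hzero : G.dist v z = 0 := by
    apply Nat.eq_zero_of_le_zero
    calc G.dist v z = distToColor G c u (c u) := hvz.trans (congrFun h (c u)).symm
      _ ≤ G.dist u u := distToColor_le_dist G c u u
      _ = 0 := SimpleGraph.dist_self
  rw [← hz, hG.dist_eq_zero_iff.1 hzero]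

theorem rainbowCode_ne_of_forall_dist_lt (h : ∀ z, c z = c y → G.dist v y < G.dist u z) :
    rainbowCode G c u ≠ rainbowCode G c v := by
  intro hcode
  obtain ⟨z, hz, huz⟩ := exists_dist_eq_distToColor G c u y
  refine (h z hz).not_ge ?_
  calc G.dist u z = distToColor G c v (c y) := huz.trans (congrFun hcode (c y))
    _ ≤ G.dist v y := distToColor_le_dist G c v y

end Colorings

section InjOnIntervals

variable {k : ℕ} {f : ℤ → Fin k} {a b : ℤ}

theorem sub_le_of_injOn_Ioo (hf : Set.InjOn f (Set.Ioo a b)) : b - a ≤ k + 1 := by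
  have := Finset.card_le_card_of_injOn (s := Finset.Ioo a b) (t := Finset.univ) f
    (fun _ _ ↦ Finset.mem_univ _) (by rwa [Finset.coe_Ioo])
  simp only [Int.card_Ioo, Finset.card_univ, Fintype.card_fin] at this
  omega

theorem exists_mem_Ioo_of_injOn (hf : Set.InjOn f (Set.Ioo a b)) (hk : k < b - a) (i : Fin k) :
    ∃ j ∈ Set.Ioo a b, f j = i := by
  have := Finset.surjOn_of_injOn_of_card_le (s := Finset.Ioo a b) (t := Finset.univ) f
    (fun _ _ ↦ Finset.mem_coe.2 (Finset.mem_univ _)) (by rwa [Finset.coe_Ioo])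
    (by simp only [Int.card_Ioo, Finset.card_univ, Fintype.card_fin]; omega)
  simpa using this (Finset.mem_coe.2 (Finset.mem_univ i))

end InjOnIntervals

section Cycle

open scoped Fin.CommRing

variable {n k : ℕ} [NeZero n] {c : Fin n → Fin k}

theorem eq_of_intCast_eq_of_natAbs_lt {i j : ℤ} (h : (i : Fin n) = j)
    (hij : (i - j).natAbs < n) : i = j := by
  have hdvd := ((CharP.intCast_eq_intCast (Fin n) n).1 h.symm).dvd
  exact sub_eq_zero.1 (Int.eq_zero_of_abs_lt_dvd hdvd (by rw [Int.abs_eq_natAbs]; omega))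

theorem cycleGraph_connected_of_neZero : (cycleGraph n).Connected := ⟨cycleGraph_preconnected⟩

theorem eq_add_one_or_eq_sub_one_of_cycleGraph_adj {u v : Fin n} (h : (cycleGraph n).Adj u v) :
    v = u + 1 ∨ v = u - 1 := by
  obtain _ | _ | n := n
  · exact u.elim0
  · exact (cycleGraph_one_adj h).elim
  · rw [cycleGraph_adj] at h
    grind

theorem dist_cycleGraph_add_one_le (u : Fin n) : (cycleGraph n).dist u (u + 1) ≤ 1 := by
  obtain _ | _ | n := n
  · exact u.elim0
  · have : Subsingleton (Fin (0 + 1)) := inferInstanceAs (Subsingleton (Fin 1))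
    simp
  · exact (dist_eq_one_iff_adj.2 (cycleGraph_adj.2 (.inr (add_sub_cancel_left u 1)))).le

theorem dist_cycleGraph_add_natCast_le (u : Fin n) (d : ℕ) :
    (cycleGraph n).dist u (u + (d : Fin n)) ≤ d := by
  induction d with
  | zero => simp
  | succ d ih =>
    calc (cycleGraph n).dist u (u + ((d + 1 : ℕ) : Fin n))
        ≤ (cycleGraph n).dist u (u + (d : Fin n))
          + (cycleGraph n).dist (u + (d : Fin n)) (u + (d : Fin n) + 1) := by
          rw [Nat.cast_succ, ← add_assoc]
          exact cycleGraph_connected_of_neZero.dist_triangle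
      _ ≤ d + 1 := add_le_add ih (dist_cycleGraph_add_one_le _)

theorem dist_cycleGraph_intCast_le (i j : ℤ) : (cycleGraph n).dist i j ≤ (j - i).natAbs := by
  wlog hij : i ≤ j generalizing i j
  · rw [dist_comm, ← Int.natAbs_neg, neg_sub]
    exact this j i (by omega)
  obtain ⟨d, rfl⟩ := Int.exists_add_of_le hij
  simpa using dist_cycleGraph_add_natCast_le (i : Fin n) d

theorem exists_lift_of_walk {u v : Fin n} (p : (cycleGraph n).Walk u v) {i : ℤ}
    (hi : (i : Fin n) = u) :
    ∃ j : ℤ, (j : Fin n) = v ∧ (j - i).natAbs ≤ p.length ∧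
      ∀ l ∈ Set.uIcc i j, (l : Fin n) ∈ p.support := by
  induction p generalizing i with
  | nil => exact ⟨i, hi, by simp, by simp [hi]⟩
  | @cons u w v h p ih =>
    obtain ⟨i', hi', hstep⟩ : ∃ i' : ℤ, (i' : Fin n) = w ∧ (i' = i + 1 ∨ i' = i - 1) := by
      rcases eq_add_one_or_eq_sub_one_of_cycleGraph_adj h with rfl | rfl
      · exact ⟨i + 1, by simp [hi], .inl rfl⟩
      · exact ⟨i - 1, by simp [hi], .inr rfl⟩
    obtain ⟨j, hj, hlen, hsupp⟩ := ih hi'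
    refine ⟨j, hj, by rw [Walk.length_cons]; omega, fun l hl ↦ ?_⟩
    rw [Walk.support_cons, List.mem_cons]
    by_cases hli : l = i
    · exact .inl (by rw [hli, hi])
    · refine .inr (hsupp l ?_)
      rw [Set.mem_uIcc] at hl ⊢
      omega

theorem exists_intCast_eq_and_natAbs_sub_eq_dist (i : ℤ) (v : Fin n) :
    ∃ j : ℤ, (j : Fin n) = v ∧ (j - i).natAbs = (cycleGraph n).dist i v := by
  obtain ⟨p, hp⟩ := cycleGraph_connected_of_neZero.exists_walk_length_eq_dist (i : Fin n) v
  obtain ⟨j, rfl, hlen, -⟩ := exists_lift_of_walk p (i := i) rfl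
  exact ⟨j, rfl, (hp ▸ hlen).antisymm (dist_cycleGraph_intCast_le i j)⟩

theorem dist_cycleGraph (u v : Fin n) : (cycleGraph n).dist u v =
    min ((u : ℤ) - v).natAbs (n - ((u : ℤ) - v).natAbs) := by
  have hu : ((u : ℤ) : Fin n) = u := by simp
  have hv : ((v : ℤ) : Fin n) = v := by simp
  have := u.isLt
  have := v.isLt
  apply le_antisymm
  · have hdirect := dist_cycleGraph_intCast_le (n := n) u v
    have hforward := dist_cycleGraph_intCast_le (n := n) u (v + n)
    have hbackward := dist_cycleGraph_intCast_le (n := n) u (v - n)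
    simp only [Int.cast_add, Int.cast_sub, Int.cast_natCast n, Fin.natCast_self, add_zero,
      sub_zero, hu, hv] at hdirect hforward hbackward
    omega
  · obtain ⟨j, hj, hdist⟩ := exists_intCast_eq_and_natAbs_sub_eq_dist (n := n) u v
    rw [hu] at hdist
    obtain ⟨t, ht⟩ := ((CharP.intCast_eq_intCast (Fin n) n).1 (hv.trans hj.symm)).dvd
    have hwinding : t = 0 ∨ (n : ℤ) ≤ n * t ∨ (n : ℤ) * t ≤ -n := by
      rcases lt_trichotomy t 0 with h | h | h
      · exact .inr (.inr (by nlinarith))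
      · exact .inl h
      · exact .inr (.inl (by nlinarith))
    rcases hwinding with rfl | h | h <;> omega

theorem distToColor_cycleGraph_of_forall_ne {i j : ℤ}
    (h : ∀ l : ℤ, (l - i).natAbs < (j - i).natAbs → c l ≠ c j) :
    distToColor (cycleGraph n) c i (c j) = (j - i).natAbs := by
  apply le_antisymm
  · exact (distToColor_le_dist _ _ _ _).trans (dist_cycleGraph_intCast_le i j)
  · obtain ⟨z, hz, hdist⟩ := exists_dist_eq_distToColor (cycleGraph n) c i j
    obtain ⟨l, rfl, hl⟩ := exists_intCast_eq_and_natAbs_sub_eq_dist i z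
    rw [← hdist, ← hl]
    exact not_lt.1 fun hlt ↦ h l hlt hz

/-- The hypothesis `hi` says that `i` is a midpoint of the interval, up to rounding: no integer
outside the interval is closer to `i` than one inside. -/
theorem distToColor_cycleGraph_of_injOn_Ioo {a b i j : ℤ}
    (hinj : Set.InjOn (fun l : ℤ ↦ c l) (Set.Ioo a b)) (hi : (a + b - 2 * i).natAbs ≤ 1)
    (hj : j ∈ Set.Ioo a b) : distToColor (cycleGraph n) c i (c j) = (j - i).natAbs := by
  refine distToColor_cycleGraph_of_forall_ne fun l hl hlj ↦ ?_
  rw [Set.mem_Ioo] at hj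
  have := hinj (Set.mem_Ioo.2 (by omega)) hj hlj
  subst this
  exact hl.false

theorem injOn_Ioo_of_forall_mem_internalVertices {u v : Fin n} {p : (cycleGraph n).Walk u v}
    (hp : ((internalVertices p).map c).Nodup) {a b : ℤ} (hab : b ≤ a + n)
    (hmem : ∀ l ∈ Set.Ioo a b, (l : Fin n) ∈ internalVertices p) :
    Set.InjOn (fun l : ℤ ↦ c l) (Set.Ioo a b) := by
  intro x hx y hy hxy
  have hcast := List.inj_on_of_nodup_map hp (hmem x hx) (hmem y hy) hxy
  rw [Set.mem_Ioo] at hx hy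
  exact eq_of_intCast_eq_of_natAbs_lt hcast (by omega)

theorem IsRainbowVertexColoring.injOn_Ioo_or_injOn_Ioo
    (hc : IsRainbowVertexColoring (cycleGraph n) c) {a b : ℤ} (hab : a < b) (hba : b < a + n) :
    Set.InjOn (fun i : ℤ ↦ c i) (Set.Ioo a b) ∨
      Set.InjOn (fun i : ℤ ↦ c i) (Set.Ioo b (a + n)) := by
  have hne : (a : Fin n) ≠ b := fun h ↦ hab.ne (eq_of_intCast_eq_of_natAbs_lt h (by omega))
  obtain ⟨p, -, hp⟩ := hc a b hne
  obtain ⟨j, hj, -, hsupp⟩ := exists_lift_of_walk p (i := a) rfl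
  have hinternal : ∀ l ∈ Set.uIcc a j, (l : Fin n) ≠ a → (l : Fin n) ≠ b →
      (l : Fin n) ∈ internalVertices p :=
    fun l hl ↦ mem_internalVertices_of_mem_support (hsupp l hl)
  obtain ⟨t, ht⟩ := ((CharP.intCast_eq_intCast (Fin n) n).1 hj.symm).dvd
  rcases le_or_gt 0 t with h | h
  · left
    have hbj : b ≤ j := by nlinarith
    refine injOn_Ioo_of_forall_mem_internalVertices hp hba.le fun l hl ↦ ?_
    rw [Set.mem_Ioo] at hl
    exact hinternal l (Set.mem_uIcc.2 (by omega))
      (fun h ↦ hl.1.ne' (eq_of_intCast_eq_of_natAbs_lt h (by omega)))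
      (fun h ↦ hl.2.ne (eq_of_intCast_eq_of_natAbs_lt h (by omega)))
  · right
    have hjb : j ≤ b - n := by nlinarith
    refine injOn_Ioo_of_forall_mem_internalVertices hp (by omega) fun l hl ↦ ?_
    rw [Set.mem_Ioo] at hl
    have hcast : ((l - n : ℤ) : Fin n) = l := by simp
    rw [← hcast]
    exact hinternal (l - n) (Set.mem_uIcc.2 (by omega))
      (fun h ↦ (sub_lt_iff_lt_add.2 hl.2).ne (eq_of_intCast_eq_of_natAbs_lt h (by omega)))
      (fun h ↦ hl.1.ne' (eq_of_intCast_eq_of_natAbs_lt (hcast ▸ h) (by omega)))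

theorem IsRainbowVertexColoring.le_sub_add_of_color_eq
    (hc : IsRainbowVertexColoring (cycleGraph n) c) {a b : ℤ} (hab : a < b) (hba : b < a + n)
    (hcol : c a = c b) : (n : ℤ) ≤ b - a + k + 3 := by
  by_contra! hlt
  rcases hc.injOn_Ioo_or_injOn_Ioo (a := a - 1) (b := b + 1) (by omega) (by omega) with h | h
  · exact hab.ne (h (Set.mem_Ioo.2 (by omega)) (Set.mem_Ioo.2 (by omega)) hcol)
  · have := sub_le_of_injOn_Ioo h
    omega

theorem exists_three_color_eq (c : Fin n → Fin k) (hk : 2 * k < n) :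
    ∃ x y z : ℤ, x < y ∧ y < z ∧ z < x + n ∧ c x = c y ∧ c y = c z := by
  obtain ⟨i, -, hi⟩ := Finset.exists_lt_card_fiber_of_mul_lt_card_of_maps_to (n := 2)
    (s := Finset.Ico (0 : ℤ) n) (t := Finset.univ) (f := fun l ↦ c l)
    (fun _ _ ↦ Finset.mem_univ _) (by simp; omega)
  let e := Finset.orderEmbOfCardLe _ hi
  have he : ∀ t, (0 ≤ e t ∧ e t < n) ∧ c (e t) = i := fun t ↦ by
    simpa only [Finset.mem_filter, Finset.mem_Ico] using Finset.orderEmbOfCardLe_mem _ hi t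
  have h0 := he 0
  have h2 := he 2
  exact ⟨e 0, e 1, e 2, e.strictMono (by decide), e.strictMono (by decide), by omega,
    h0.2.trans (he 1).2.symm, (he 1).2.trans h2.2.symm⟩

theorem IsRainbowVertexColoring.two_mul_le_three_mul_add_nine
    (hc : IsRainbowVertexColoring (cycleGraph n) c) (hk : 2 * k < n) : 2 * n ≤ 3 * k + 9 := by
  obtain ⟨x, y, z, hxy, hyz, hzx, hcxy, hcyz⟩ := exists_three_color_eq c hk
  have hgap₁ := hc.le_sub_add_of_color_eq hxy (by omega) hcxy
  have hgap₂ := hc.le_sub_add_of_color_eq hyz (by omega) hcyz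
  have hgap₃ := hc.le_sub_add_of_color_eq hzx (by omega) (by simp [hcxy, hcyz])
  omega

theorem rainbowCode_cycleGraph_eq_of_injOn_Ioo {a b i a' b' i' : ℤ}
    (hinj : Set.InjOn (fun l : ℤ ↦ c l) (Set.Ioo a b)) (hi : (a + b - 2 * i).natAbs ≤ 1)
    (hk : k < b - a)
    (hinj' : Set.InjOn (fun l : ℤ ↦ c l) (Set.Ioo a' b')) (hi' : (a' + b' - 2 * i').natAbs ≤ 1)
    (hk' : k < b' - a')
    (h : ∀ j ∈ Set.Ioo a b, ∀ j' ∈ Set.Ioo a' b', c j = c j' →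
      (j - i).natAbs = (j' - i').natAbs) :
    rainbowCode (cycleGraph n) c i = rainbowCode (cycleGraph n) c i' := by
  funext t
  obtain ⟨j, hj, rfl⟩ := exists_mem_Ioo_of_injOn hinj hk t
  obtain ⟨j', hj', hcol⟩ := exists_mem_Ioo_of_injOn hinj' hk' (c j)
  calc distToColor (cycleGraph n) c i (c j)
      = (j - i).natAbs := distToColor_cycleGraph_of_injOn_Ioo hinj hi hj
    _ = (j' - i').natAbs := h j hj j' hj' hcol.symm
    _ = distToColor (cycleGraph n) c i' (c j') :=
      (distToColor_cycleGraph_of_injOn_Ioo hinj' hi' hj').symm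
    _ = distToColor (cycleGraph n) c i' (c j) := by rw [hcol]

theorem rainbowCode_cycleGraph_eq_of_color_eq (hk : k ≤ 3) {i i' : ℤ}
    (hi : Set.InjOn (fun l : ℤ ↦ c l) (Set.Ioo (i - 2) (i + 2)))
    (hi' : Set.InjOn (fun l : ℤ ↦ c l) (Set.Ioo (i' - 2) (i' + 2))) (hcol : c i = c i') :
    rainbowCode (cycleGraph n) c i = rainbowCode (cycleGraph n) c i' := by
  refine rainbowCode_cycleGraph_eq_of_injOn_Ioo hi (by omega) (by omega) hi' (by omega)
    (by omega) fun j hj j' hj' hjj' ↦ ?_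
  have hiff : j = i ↔ j' = i' :=
    ⟨fun h ↦ hi' hj' (by simp) (by simp [← hjj', h, hcol]),
      fun h ↦ hi hj (by simp) (by simp [hjj', h, hcol])⟩
  rw [Set.mem_Ioo] at hj hj'
  omega

end Cycle

section EightAndTen

open scoped Fin.CommRing

variable {k : ℕ}

theorem not_isLocatingRainbowColoring_cycleGraph_eight (hk : k ≤ 3) (c : Fin 8 → Fin k) :
    ¬ IsLocatingRainbowColoring (cycleGraph 8) c := by
  rintro ⟨hrainbow, hinj⟩
  have hcenter : ∀ i : Fin 4, ∃ j : ℤ, (j = i ∨ j = i + 4) ∧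
      Set.InjOn (fun l : ℤ ↦ c l) (Set.Ioo (j - 2) (j + 2)) := by
    intro i
    rcases hrainbow.injOn_Ioo_or_injOn_Ioo (a := i - 2) (b := i + 2) (by omega) (by omega) with
      h | h
    · exact ⟨i, .inl rfl, h⟩
    · exact ⟨i + 4, .inr rfl, by convert h using 2 <;> push_cast <;> ring⟩
  choose center hcenter_eq hcenter_inj using hcenter
  have hcolor_inj : Function.Injective fun i ↦ c (center i) := by
    intro i j hij
    have hcast := hinj (rainbowCode_cycleGraph_eq_of_color_eq hk (hcenter_inj i)
      (hcenter_inj j) hij)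
    have := hcenter_eq i
    have := hcenter_eq j
    have := eq_of_intCast_eq_of_natAbs_lt hcast (by omega)
    omega
  have := Fintype.card_le_of_injective _ hcolor_inj
  simp only [Fintype.card_fin] at this
  omega

theorem rainbowCode_cycleGraph_ten_eq {c : Fin 10 → Fin k} (hk : k ≤ 4)
    (hc : IsRainbowVertexColoring (cycleGraph 10) c) {p : ℤ} (h₁ : c p = c (p + 3 : ℤ))
    (h₂ : c p = c (p + 6 : ℤ)) :
    rainbowCode (cycleGraph 10) c p = rainbowCode (cycleGraph 10) c (p + 6 : ℤ) := by
  have hwrap : c (p - 2 : ℤ) = c (p + 8 : ℤ) := by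
    rw [show p + 8 = p - 2 + (10 : ℕ) by push_cast; ring, Int.cast_add, Int.cast_natCast]
    simp
  have hleft : Set.InjOn (fun l : ℤ ↦ c l) (Set.Ioo (p - 3) (p + 2)) := by
    refine (hc.injOn_Ioo_or_injOn_Ioo (by omega) (by omega)).resolve_right fun h ↦ ?_
    have := h (Set.mem_Ioo.2 (by omega)) (Set.mem_Ioo.2 (by omega)) (h₁.symm.trans h₂)
    omega
  have hright : Set.InjOn (fun l : ℤ ↦ c l) (Set.Ioo (p + 4) (p + 9)) := by
    have hends : p - 1 + (10 : ℕ) = p + 9 := by push_cast; ring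
    refine hends ▸ (hc.injOn_Ioo_or_injOn_Ioo (a := p - 1) (b := p + 4) (by omega)
      (by omega)).resolve_left fun h ↦ ?_
    have := h (Set.mem_Ioo.2 (by omega)) (Set.mem_Ioo.2 (by omega)) h₁
    omega
  refine rainbowCode_cycleGraph_eq_of_injOn_Ioo hleft (by omega) (by omega) hright (by omega)
    (by omega) fun j hj j' hj' hjj' ↦ ?_
  have hcenter : j = p ↔ j' = p + 6 :=
    ⟨fun h ↦ hright hj' (by simp) (by simp [← hjj', h, h₂]),
      fun h ↦ hleft hj (by simp) (by simp [hjj', h, h₂])⟩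
  have hend : j = p - 2 ↔ j' = p + 8 :=
    ⟨fun h ↦ hright hj' (by simp) (hjj'.symm.trans (h ▸ hwrap)),
      fun h ↦ hleft hj (Set.mem_Ioo.2 (by omega)) (hjj'.trans (h ▸ hwrap.symm))⟩
  rw [Set.mem_Ioo] at hj hj'
  omega

theorem not_isLocatingRainbowColoring_cycleGraph_ten (hk : k ≤ 4) (c : Fin 10 → Fin k) :
    ¬ IsLocatingRainbowColoring (cycleGraph 10) c := by
  rintro ⟨hc, hinj⟩
  suffices ∃ p : ℤ, c p = c (p + 3 : ℤ) ∧ c p = c (p + 6 : ℤ) by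
    obtain ⟨p, h₁, h₂⟩ := this
    have := eq_of_intCast_eq_of_natAbs_lt (hinj (rainbowCode_cycleGraph_ten_eq hk hc h₁ h₂))
      (by omega)
    omega
  obtain ⟨x, y, z, hxy, hyz, hzx, hcxy, hcyz⟩ := exists_three_color_eq c (by omega)
  have hwrap : ∀ i : ℤ, c (i + 10 : ℤ) = c i := fun i ↦ by
    rw [Int.cast_add]; congr 1; exact add_zero _
  have hgap₁ := hc.le_sub_add_of_color_eq hxy (by omega) hcxy
  have hgap₂ := hc.le_sub_add_of_color_eq hyz (by omega) hcyz
  have hgap₃ := hc.le_sub_add_of_color_eq hzx (by omega) (by simp [hcxy, hcyz])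
  obtain ⟨rfl, rfl⟩ | ⟨rfl, hx⟩ | ⟨hx, hy⟩ : (y = x + 3 ∧ z = x + 6) ∨
      (z = y + 3 ∧ x + 10 = y + 6) ∨ (x + 10 = z + 3 ∧ y + 10 = z + 6) := by omega
  · exact ⟨x, hcxy, hcxy.trans hcyz⟩
  · exact ⟨y, hcyz, by rw [← hx, hwrap, hcxy]⟩
  · exact ⟨z, by rw [← hx, hwrap, hcxy, hcyz], by rw [← hy, hwrap, hcyz]⟩

end EightAndTen

section TwistedColoring

/-- The colors of the vertices `i = 0, 1, 2, …` of a cycle of length `2 * m - 1` or `2 * m`: first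
`0, …, m - 1`, then the same list with `0` and `1` exchanged. The exchange is what separates the
codes of `i` and `i + m`. -/
def twistedColor (m i : ℕ) : ℕ :=
  if i < m then i else if i < m + 2 then m + 1 - i else i - m

theorem twistedColor_lt {m i : ℕ} (hm : 2 ≤ m) (hi : i < 2 * m) : twistedColor m i < m := by
  grind [twistedColor]

theorem twistedColor_eq_iff {m i j : ℕ} (hi : i < 2 * m) (hj : j < 2 * m) :
    twistedColor m i = twistedColor m j ↔ i = j ∨ i + j = m + 1 ∧ (i < 2 ∨ j < 2) ∨
      2 ≤ i ∧ 2 ≤ j ∧ (i = j + m ∨ j = i + m) := by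
  grind [twistedColor]

/-- The coloring of `C_n` by `twistedColor`, with `⌈n / 2⌉` colors; it attains `rvcl(C_n)`. -/
def twistedColoring (n : ℕ) (hn : 3 ≤ n) : Fin n → Fin ((n + 1) / 2) :=
  fun v ↦ ⟨twistedColor ((n + 1) / 2) v, twistedColor_lt (by omega) (by omega)⟩

variable {n : ℕ}

theorem twistedColoring_eq_iff (hn : 3 ≤ n) {u v : Fin n} :
    twistedColoring n hn u = twistedColoring n hn v ↔ (u : ℕ) = v ∨
      (u + v : ℕ) = (n + 1) / 2 + 1 ∧ ((u : ℕ) < 2 ∨ (v : ℕ) < 2) ∨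
      2 ≤ (u : ℕ) ∧ 2 ≤ (v : ℕ) ∧ ((u : ℕ) = v + (n + 1) / 2 ∨ (v : ℕ) = u + (n + 1) / 2) := by
  rw [twistedColoring, Fin.mk.injEq]
  exact twistedColor_eq_iff (by omega) (by omega)

theorem isRainbowVertexColoring_twistedColoring (hn : 3 ≤ n) :
    IsRainbowVertexColoring (cycleGraph n) (twistedColoring n hn) := by
  have : NeZero n := ⟨by omega⟩
  refine isRainbowVertexColoring_of_dist_lt cycleGraph_connected_of_neZero
    fun u v x y hne hcol ↦ ?_
  rw [twistedColoring_eq_iff, or_iff_right (Fin.val_ne_of_ne hne)] at hcol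
  rw [dist_cycleGraph, dist_cycleGraph]
  omega

theorem rainbowCode_twistedColoring_ne (hn : 8 ≤ n) {u v : Fin n} (huv : u < v) :
    rainbowCode (cycleGraph n) (twistedColoring n (by omega)) u ≠
      rainbowCode (cycleGraph n) (twistedColoring n (by omega)) v := by
  have : NeZero n := ⟨by omega⟩
  intro hcode
  rw [Fin.lt_def] at huv
  have hcol := color_eq_of_rainbowCode_eq cycleGraph_connected_of_neZero hcode
  rw [twistedColoring_eq_iff] at hcol
  -- Let `m = ⌈n / 2⌉`. Color `2` separates the two vertices of color `0`, and the two of color `1`.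
  -- Color `0` separates all other pairs: its vertices `0` and `m + 1` lie at distances `i` and
  -- `m + 1 - i` from `u = i`, but at distances `n - m - i` and `i - 1` from `v = i + m`.
  suffices ∃ y : Fin n,
      (∀ z, twistedColoring n (by omega) z = twistedColoring n (by omega) y →
        (cycleGraph n).dist u y < (cycleGraph n).dist v z) ∨
      (∀ z, twistedColoring n (by omega) z = twistedColoring n (by omega) y →
        (cycleGraph n).dist v y < (cycleGraph n).dist u z) by
    obtain ⟨y, hy | hy⟩ := this
    · exact rainbowCode_ne_of_forall_dist_lt hy hcode.symm
    · exact rainbowCode_ne_of_forall_dist_lt hy hcode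
  obtain hu | ⟨hu, hv⟩ | ⟨hu, hv, hnear⟩ | ⟨hu, hv, hfar⟩ :
      ((u : ℕ) = 1 ∧ (v : ℕ) = (n + 1) / 2) ∨
      ((u : ℕ) = 0 ∧ (v : ℕ) = (n + 1) / 2 + 1) ∨
      (2 ≤ (u : ℕ) ∧ (v : ℕ) = u + (n + 1) / 2 ∧ u + v ≤ n + 1) ∨
      (2 ≤ (u : ℕ) ∧ (v : ℕ) = u + (n + 1) / 2 ∧ n + 1 < u + v) := by omega
  · refine ⟨⟨2, by omega⟩, .inl fun z hz ↦ ?_⟩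
    simp only [twistedColoring_eq_iff, dist_cycleGraph] at hz ⊢
    omega
  · refine ⟨⟨(n + 1) / 2 + 2, by omega⟩, .inr fun z hz ↦ ?_⟩
    simp only [twistedColoring_eq_iff, dist_cycleGraph] at hz ⊢
    omega
  · refine ⟨⟨(n + 1) / 2 + 1, by omega⟩, .inr fun z hz ↦ ?_⟩
    simp only [twistedColoring_eq_iff, dist_cycleGraph] at hz ⊢
    omega
  · refine ⟨⟨0, by omega⟩, .inr fun z hz ↦ ?_⟩
    simp only [twistedColoring_eq_iff, dist_cycleGraph] at hz ⊢
    omega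

theorem isLocatingRainbowColoring_twistedColoring (hn : 8 ≤ n) :
    IsLocatingRainbowColoring (cycleGraph n) (twistedColoring n (by omega)) := by
  refine ⟨isRainbowVertexColoring_twistedColoring _, fun u v hcode ↦ ?_⟩
  rcases lt_trichotomy u v with huv | huv | huv
  · exact (rainbowCode_twistedColoring_ne hn huv hcode).elim
  · exact huv
  · exact (rainbowCode_twistedColoring_ne hn huv hcode.symm).elim

end TwistedColoring

theorem le_two_mul_of_isLocatingRainbowColoring {n k : ℕ}
    (hn : n = 8 ∨ n = 10 ∨ n = 14 ∨ 16 ≤ n) {c : Fin n → Fin k}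
    (hc : IsLocatingRainbowColoring (cycleGraph n) c) : n ≤ 2 * k := by
  by_contra! hlt
  obtain rfl | rfl | hn : n = 8 ∨ n = 10 ∨ n = 14 ∨ 16 ≤ n := hn
  · exact not_isLocatingRainbowColoring_cycleGraph_eight (by omega) c hc
  · exact not_isLocatingRainbowColoring_cycleGraph_ten (by omega) c hc
  · have : NeZero n := ⟨by omega⟩
    have := hc.1.two_mul_le_three_mul_add_nine hlt
    omega

end LocatingRainbow

open LocatingRainbow SimpleGraph in
/-- For every integer `n` with `n = 8`, `n = 10`, `n = 14`, or `n ≥ 16`, the cycle `C_n`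
satisfies `rvcl(C_n) = ⌈n/2⌉`. -/
theorem rvcl_cycleGraph_large (n : ℕ) (hn : n = 8 ∨ n = 10 ∨ n = 14 ∨ 16 ≤ n) :
    rvcl (cycleGraph n) = (n + 1) / 2 := by
  apply le_antisymm
  · exact Nat.sInf_le ⟨_, isLocatingRainbowColoring_twistedColoring (by omega)⟩
  · refine le_csInf ⟨_, _, isLocatingRainbowColoring_twistedColoring (n := n) (by omega)⟩ ?_
    rintro k ⟨c, hc⟩
    have := le_two_mul_of_isLocatingRainbowColoring hn hc
    omega
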